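/- arXiv:2407.14610 — 3 statements merged into one kernel-verified Lean document; each statement's English description precedes it below -/
import Mathlib

section
/- Let G ⊆ Ĉ be a lemniscate graph with vertex set V, and let e be an edge of G, i.e. a connected component of G \ V. Then there exists a Jordan curve γ with e ⊆ γ ⊆ G. -/
open Set Metric Topology Filter Polynomial

noncomputable section

/-- A Jordan curve: a set homeomorphic to the unit circle. -/
def IsJordanCurve {X : Type*} [TopologicalSpace X] (E : Set X) : Prop :=
  Nonempty (E ≃ₜ (Metric.sphere (0 : ℂ) 1 : Set ℂ))

/-- A simple arc: a set homeomorphic to the open unit interval `(0,1)`. -/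
def IsSimpleArc {X : Type*} [TopologicalSpace X] (E : Set X) : Prop :=
  Nonempty (E ≃ₜ (Set.Ioo (0 : ℝ) 1 : Set ℝ))

/-- The connected components of a set. -/
def setComponents {X : Type*} [TopologicalSpace X] (A : Set X) : Set (Set X) :=
  {C | ∃ x ∈ A, C = connectedComponentIn A x}

/-- The edges of the pair `(G, V)`: the connected components of `G \ V`. -/
def graphEdges {X : Type*} [TopologicalSpace X] (G V : Set X) : Set (Set X) :=
  setComponents (G \ V)

/-- The degree of a vertex `v`: the number of edges `e` with `v ∈ closure e \ e`,
where an edge is counted twice if `closure e \ e = {v}`. -/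
def vertexDegree {X : Type*} [TopologicalSpace X] (G V : Set X) (v : X) : ℕ :=
  {e ∈ graphEdges G V | v ∈ closure e \ e}.ncard +
    {e ∈ graphEdges G V | closure e \ e = {v}}.ncard

/-- `G` is a lemniscate graph with (finite) vertex set `V`. -/
structure IsLemniscateGraphWith {X : Type*} [TopologicalSpace X] (G V : Set X) : Prop where
  vertex_subset : V ⊆ G
  vertex_finite : V.Finite
  edges_finite : (graphEdges G V).Finite
  edge_shape : ∀ e ∈ graphEdges G V, IsJordanCurve e ∨ (IsSimpleArc e ∧ closure e \ e ⊆ V)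
  degree_even : ∀ v ∈ V, Even (vertexDegree G V v)
  degree_ge_four : ∀ v ∈ V, 4 ≤ vertexDegree G V v

/-- `G` is a lemniscate graph (for some finite vertex set). -/
def IsLemniscateGraph {X : Type*} [TopologicalSpace X] (G : Set X) : Prop :=
  ∃ V, IsLemniscateGraphWith G V

/-- The faces of `G`: the connected components of the complement of `G`. -/
def graphFaces {X : Type*} [TopologicalSpace X] (G : Set X) : Set (Set X) :=
  setComponents Gᶜ

/-- A 2-coloring of the faces of `G`, recorded by the set `grey` of grey faces:
two distinct faces whose closures share a common edge get different colors. -/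
def IsTwoColoring {X : Type*} [TopologicalSpace X] (G V : Set X) (grey : Set (Set X)) : Prop :=
  grey ⊆ graphFaces G ∧
    ∀ F₁ ∈ graphFaces G, ∀ F₂ ∈ graphFaces G, F₁ ≠ F₂ →
      (∃ e ∈ graphEdges G V, e ⊆ closure F₁ ∧ e ⊆ closure F₂) →
      (F₁ ∈ grey ↔ F₂ ∉ grey)

/-- The distance function of a metric space structure on the Riemann sphere. -/
def mdist (m : MetricSpace (OnePoint ℂ)) : OnePoint ℂ → OnePoint ℂ → ℝ :=
  m.toPseudoMetricSpace.toDist.dist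

/-- The metric space structure `m` induces the standard topology of the Riemann sphere. -/
def InducesSphereTopology (m : MetricSpace (OnePoint ℂ)) : Prop :=
  m.toPseudoMetricSpace.toUniformSpace.toTopologicalSpace =
    (inferInstance : TopologicalSpace (OnePoint ℂ))

/-- `E` and `F` are `ε`-homeomorphic with respect to the metric `m`: there is a
homeomorphism of the sphere carrying `E` to `F` and moving points less than `ε`. -/
def EpsHomeomorphic (m : MetricSpace (OnePoint ℂ)) (ε : ℝ) (E F : Set (OnePoint ℂ)) : Prop :=
  ∃ φ : OnePoint ℂ ≃ₜ OnePoint ℂ, φ '' E = F ∧ ∃ c < ε, ∀ z, mdist m (φ z) z ≤ c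

/-- `r` is a rational map on the Riemann sphere: the continuous extension of `p/q`
for coprime polynomials `p`, `q`, not both constant. -/
def IsRationalMap (r : OnePoint ℂ → OnePoint ℂ) : Prop :=
  Continuous r ∧ ∃ p q : ℂ[X], IsCoprime p q ∧ ¬(p.natDegree = 0 ∧ q.natDegree = 0) ∧
    ∀ z : ℂ, q.eval z ≠ 0 → r (z : OnePoint ℂ) = ((p.eval z / q.eval z : ℂ) : OnePoint ℂ)

/-- The lemniscate of `r` : the preimage of the unit circle. -/
def lemniscate (r : OnePoint ℂ → OnePoint ℂ) : Set (OnePoint ℂ) :=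
  r ⁻¹' ((fun w : ℂ => (w : OnePoint ℂ)) '' {w : ℂ | ‖w‖ = 1})

/-- The copy of a planar set inside the Riemann sphere. -/
def toSphere (s : Set ℂ) : Set (OnePoint ℂ) := (fun z : ℂ => (z : OnePoint ℂ)) '' s


section Arcs

variable {X : Type*} [TopologicalSpace X]

/-- The image of a closed path that is injective apart from its endpoints is a Jordan curve. -/
theorem isJordanCurve_range_of_closed_path [T2Space X] {x : X} (γ : Path x x)
    (hγ : ∀ s t, γ s = γ t → s = t ∨ (s = 0 ∧ t = 1) ∨ (s = 1 ∧ t = 0)) :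
    IsJordanCurve (range γ) := by
  have : Fact ((0 : ℝ) < 1) := ⟨one_pos⟩
  let g : AddCircle (1 : ℝ) → X := AddCircle.liftIco 1 0 γ.extend
  have hg : Continuous g :=
    AddCircle.liftIco_zero_continuous (by simp) γ.continuous_extend.continuousOn
  have hrep : ∀ z : AddCircle (1 : ℝ), ∃ t : unitInterval, (t : ℝ) < 1 ∧
      z = ((t : ℝ) : AddCircle (1 : ℝ)) ∧ g z = γ t := by
    intro z
    obtain ⟨t, ht, rfl⟩ : ∃ t ∈ Ico (0 : ℝ) 1, (t : AddCircle (1 : ℝ)) = z := by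
      have := AddCircle.coe_image_Ico_eq (1 : ℝ) 0
      have hz : z ∈ (univ : Set (AddCircle (1 : ℝ))) := mem_univ z
      rw [← this, zero_add] at hz
      exact hz
    refine ⟨⟨t, ht.1, ht.2.le⟩, ht.2, rfl, ?_⟩
    simp only [g]
    rw [AddCircle.liftIco_zero_coe_apply ht, Path.extend_apply _ ⟨ht.1, ht.2.le⟩]
  have hinj : Function.Injective g := by
    intro z w hzw
    obtain ⟨s, hs, rfl, hgs⟩ := hrep z
    obtain ⟨t, ht, rfl, hgt⟩ := hrep w
    rw [hgs, hgt] at hzw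
    rcases hγ s t hzw with rfl | ⟨-, rfl⟩ | ⟨rfl, -⟩
    · rfl
    · simp at ht
    · simp at hs
  have hrange : range g = range γ := by
    apply Subset.antisymm
    · rintro _ ⟨z, rfl⟩
      obtain ⟨t, -, -, h⟩ := hrep z
      exact ⟨t, h.symm⟩
    · rintro _ ⟨t, rfl⟩
      rcases lt_or_eq_of_le t.2.2 with ht | ht
      · refine ⟨((t : ℝ) : AddCircle (1 : ℝ)), ?_⟩
        simp only [g]
        rw [AddCircle.liftIco_zero_coe_apply ⟨t.2.1, ht⟩, Path.extend_apply _ t.2]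
      · refine ⟨((0 : ℝ) : AddCircle (1 : ℝ)), ?_⟩
        simp only [g]
        rw [AddCircle.liftIco_zero_coe_apply ⟨le_rfl, one_pos⟩,
          show t = 1 from Subtype.ext ht]
        simp
  have hemb : IsEmbedding g := (hg.isClosedEmbedding hinj).isEmbedding
  rw [← hrange]
  exact ⟨hemb.toHomeomorph.symm.trans (AddCircle.homeomorphCircle one_ne_zero)⟩

theorem Path.trans_injective {x y z : X} {p : Path x y} {q : Path y z}
    (hp : Function.Injective p) (hq : Function.Injective q) (h : range p ∩ range q ⊆ {y}) :
    Function.Injective (p.trans q) := by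
  have key : ∀ s t, p s = q t → t = 0 := fun s t hst ↦ by
    have : q t = y := h ⟨⟨s, hst⟩, ⟨t, rfl⟩⟩
    exact hq (by rw [this, q.source])
  intro s t hst
  rw [Path.trans_apply, Path.trans_apply] at hst
  split_ifs at hst with hs ht ht
  · have := congrArg Subtype.val (hp hst)
    exact Subtype.ext (by simpa using this)
  · have := congrArg Subtype.val (key _ _ hst)
    simp at this ht
    linarith
  · have := congrArg Subtype.val (key _ _ hst.symm)
    simp at this hs
    linarith
  · have := congrArg Subtype.val (hq hst)
    exact Subtype.ext (by simpa using this)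

theorem Path.trans_closed_eq {x y : X} {p : Path x y} {q : Path y x}
    (hp : Function.Injective p) (hq : Function.Injective q) (h : range p ∩ range q ⊆ {x, y})
    (s t : unitInterval) (hst : p.trans q s = p.trans q t) :
    s = t ∨ (s = 0 ∧ t = 1) ∨ (s = 1 ∧ t = 0) := by
  have key : ∀ s t, p s = q t → t = 0 ∨ s = 0 ∧ t = 1 := fun s t hst ↦ by
    rcases h ⟨⟨s, hst⟩, ⟨t, rfl⟩⟩ with h | h
    · exact .inr ⟨hp (by rw [hst, h, p.source]), hq (by rw [h, q.target])⟩
    · exact .inl (hq (by rw [h, q.source]))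
  rw [Path.trans_apply, Path.trans_apply] at hst
  split_ifs at hst with hs ht ht
  · have := congrArg Subtype.val (hp hst)
    exact .inl (Subtype.ext (by simpa using this))
  · rcases key _ _ hst with h | ⟨h0, h1⟩
    · have := congrArg Subtype.val h
      simp at this ht
      linarith
    · have h0 := congrArg Subtype.val h0
      have h1 := congrArg Subtype.val h1
      simp at h0 h1
      exact .inr (.inl ⟨h0, Subtype.ext (by change _ = (1 : ℝ); linarith)⟩)
  · rcases key _ _ hst.symm with h | ⟨h0, h1⟩
    · have := congrArg Subtype.val h
      simp at this hs
      linarith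
    · have h0 := congrArg Subtype.val h0
      have h1 := congrArg Subtype.val h1
      simp at h0 h1
      exact .inr (.inr ⟨Subtype.ext (by change _ = (1 : ℝ); linarith), h0⟩)
  · have := congrArg Subtype.val (hq hst)
    exact .inl (Subtype.ext (by simpa using this))

/-- Along a filter with a basis of connected sets that leaves every point, an embedding into a
compact Hausdorff space converges as soon as its image has finite remainder. -/
theorem Topology.IsEmbedding.exists_tendsto_of_finite_remainder [T2Space X] [CompactSpace X]
    {Y : Type*} [TopologicalSpace Y] {h : Y → X} (hh : IsEmbedding h) {L : Filter Y} [L.NeBot]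
    (hconn : ∀ s ∈ L, ∃ t ∈ L, t ⊆ s ∧ IsPreconnected t) (hleave : ∀ y, Disjoint (𝓝 y) L)
    (hfin : (closure (range h) \ range h).Finite) :
    ∃ a ∈ closure (range h) \ range h, Tendsto h L (𝓝 a) := by
  have hclu : ∀ x, MapClusterPt x L h → x ∈ closure (range h) \ range h := by
    intro x hx
    refine ⟨?_, ?_⟩
    · rw [mem_closure_iff_clusterPt]
      exact ClusterPt.mono hx (le_principal_iff.2 range_mem_map)
    · rintro ⟨y, rfl⟩
      have : 𝓝 (h y) ⊓ map h L = ⊥ := by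
        rw [← Filter.push_pull', ← hh.nhds_eq_comap, (hleave y).eq_bot, Filter.map_bot]
      exact hx.neBot.ne this
  obtain ⟨a, ha⟩ : ∃ a, MapClusterPt a L h := exists_clusterPt_of_compactSpace _
  refine ⟨a, hclu a ha, tendsto_nhds_of_unique_mapClusterPt fun b hb ↦ ?_⟩
  by_contra hba
  obtain ⟨U, W, hU, hW, haU, hWr, hUW⟩ : SeparatedNhds {a}
      ((closure (range h) \ range h) \ {a}) :=
    SeparatedNhds.of_isCompact_isCompact isCompact_singleton
      (hfin.subset sdiff_subset).isCompact (by simp)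
  have hev : h ⁻¹' (U ∪ W) ∈ L := by
    by_contra hcon
    have hne : (L ⊓ 𝓟 (h ⁻¹' (U ∪ W))ᶜ).NeBot := by
      rw [neBot_iff, Ne, ← disjoint_iff, disjoint_principal_right, compl_compl]
      exact hcon
    obtain ⟨c, hc⟩ : ∃ c, MapClusterPt c (L ⊓ 𝓟 (h ⁻¹' (U ∪ W))ᶜ) h :=
      exists_clusterPt_of_compactSpace _
    have hcUW : c ∈ U ∪ W := by
      have hcr := hclu c (hc.mono inf_le_left)
      by_cases hca : c = a
      · exact .inl (haU hca)
      · exact .inr (hWr ⟨hcr, hca⟩)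
    have hfr := hc.frequently ((hU.union hW).mem_nhds hcUW)
    obtain ⟨y, hy, hy'⟩ := (hfr.and_eventually (mem_inf_of_right (mem_principal_self _))).exists
    exact hy' hy
  obtain ⟨t, htL, hts, htc⟩ := hconn _ hev
  have hsub : h '' t ⊆ U ∪ W := image_subset_iff.2 hts
  obtain ⟨y, hyU, hyt⟩ :=
    ((ha.frequently (hU.mem_nhds (haU rfl))).and_eventually htL).exists
  have htU : h '' t ⊆ U := (htc.image h hh.continuous.continuousOn).subset_left_of_subset_union
    hU hW hUW hsub ⟨h y, mem_image_of_mem h hyt, hyU⟩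
  obtain ⟨z, hzW, hzt⟩ :=
    ((hb.frequently (hW.mem_nhds (hWr ⟨hclu b hb, hba⟩))).and_eventually htL).exists
  exact hUW.le_bot ⟨htU (mem_image_of_mem h hzt), hzW⟩

/-- The closure of a simple arc with finite remainder is the image of a path which is injective
apart from possibly identifying its endpoints, and the remainder consists of these endpoints. -/
theorem IsSimpleArc.exists_path [T2Space X] [CompactSpace X] {e : Set X} (he : IsSimpleArc e)
    (hfin : (closure e \ e).Finite) :
    ∃ (u v : X) (p : Path u v), range p = closure e ∧ closure e \ e = {u, v} ∧
      ∀ s t, p s = p t → s = t ∨ (s = 0 ∧ t = 1) ∨ (s = 1 ∧ t = 0) := by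
  obtain ⟨φ⟩ := he
  let h : Ioo (0 : ℝ) 1 → X := fun t ↦ φ.symm t
  have hh : IsEmbedding h := IsEmbedding.subtypeVal.comp φ.symm.isEmbedding
  have hrange : range h = e := by
    have : h = Subtype.val ∘ φ.symm := rfl
    rw [this, range_comp, φ.symm.surjective.range_eq, image_univ, Subtype.range_coe]
  have hne : Nonempty (Ioo (0 : ℝ) 1) := ⟨⟨1 / 2, by norm_num, by norm_num⟩⟩
  rw [← hrange] at hfin
  obtain ⟨u, hu, hlu⟩ := hh.exists_tendsto_of_finite_remainder (L := atBot) (fun s hs ↦ by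
    obtain ⟨b, hb⟩ := mem_atBot_sets.1 hs
    refine ⟨Iic b, Iic_mem_atBot b, hb, ?_⟩
    rw [← IsInducing.subtypeVal.isPreconnected_image]
    have : Subtype.val '' Iic b = Ioc (0 : ℝ) b := by
      ext x
      have := b.2.2
      simp only [mem_image, mem_Iic, Subtype.exists, mem_Ioc, ← Subtype.coe_le_coe, mem_Ioo]
      constructor
      · rintro ⟨_, hx, hxb, rfl⟩
        exact ⟨hx.1, hxb⟩
      · rintro ⟨hx, hxb⟩
        exact ⟨x, ⟨hx, by linarith⟩, hxb, rfl⟩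
    rw [this]
    exact isPreconnected_Ioc) disjoint_nhds_atBot hfin
  obtain ⟨v, hv, hlv⟩ := hh.exists_tendsto_of_finite_remainder (L := atTop) (fun s hs ↦ by
    obtain ⟨b, hb⟩ := mem_atTop_sets.1 hs
    refine ⟨Ici b, Ici_mem_atTop b, hb, ?_⟩
    rw [← IsInducing.subtypeVal.isPreconnected_image]
    have : Subtype.val '' Ici b = Ico (b : ℝ) 1 := by
      ext x
      have := b.2.1
      simp only [mem_image, mem_Ici, Subtype.exists, mem_Ico, ← Subtype.coe_le_coe, mem_Ioo]
      constructor
      · rintro ⟨_, hx, hxb, rfl⟩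
        exact ⟨hxb, hx.2⟩
      · rintro ⟨hxb, hx⟩
        exact ⟨x, ⟨by linarith, hx⟩, hxb, rfl⟩
    rw [this]
    exact isPreconnected_Ico) disjoint_nhds_atTop hfin
  rw [hrange] at hu hv
  let f : ℝ → X := Function.extend Subtype.val h fun _ ↦ u
  have hfh : ∀ t : Ioo (0 : ℝ) 1, f t = h t := fun t ↦
    Subtype.val_injective.extend_apply h _ t
  have hfcomp : f ∘ Subtype.val = h := funext hfh
  have hfc : ContinuousOn f (Ioo 0 1) := by
    rw [continuousOn_iff_continuous_domRestrict]
    change Continuous (f ∘ Subtype.val)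
    exact hfcomp ▸ hh.continuous
  have hfu : Tendsto f (𝓝[>] 0) (𝓝 u) := by
    rwa [← map_coe_Ioo_atBot one_pos, tendsto_map'_iff, hfcomp]
  have hfv : Tendsto f (𝓝[<] 1) (𝓝 v) := by
    rwa [← map_coe_Ioo_atTop one_pos, tendsto_map'_iff, hfcomp]
  let F := extendFrom (Ioo (0 : ℝ) 1) f
  have hF : ContinuousOn F (Icc 0 1) := continuousOn_Icc_extendFrom_Ioo hfc hfu hfv
  have hFf : ∀ t : Ioo (0 : ℝ) 1, F t = h t := fun t ↦
    (extendFrom_extends hfc t t.2).trans (hfh t)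
  let p : Path u v :=
    { toFun := fun t ↦ F t
      continuous_toFun := continuousOn_iff_continuous_domRestrict.1 hF
      source' := eq_lim_at_left_extendFrom_Ioo one_pos hfu
      target' := eq_lim_at_right_extendFrom_Ioo one_pos hfv }
  have hpI : ∀ t : unitInterval, t = 0 ∨ t = 1 ∨ ∃ y : Ioo (0 : ℝ) 1, (y : ℝ) = t ∧ p t = h y := by
    intro t
    rcases eq_endpoints_or_mem_Ioo_of_mem_Icc t.2 with ht | ht | ht
    · exact .inl (Subtype.ext ht)
    · exact .inr (.inl (Subtype.ext ht))
    · exact .inr (.inr ⟨⟨t, ht⟩, rfl, hFf ⟨t, ht⟩⟩)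
  have hhe : ∀ y, h y ∈ e := fun y ↦ (φ.symm y).2
  have hpr : range p = e ∪ {u, v} := by
    apply Subset.antisymm
    · rintro _ ⟨t, rfl⟩
      rcases hpI t with rfl | rfl | ⟨y, -, hy⟩
      · simp
      · simp
      · exact .inl (hy ▸ hhe y)
    · rintro x (hx | rfl | rfl)
      · rw [← hrange] at hx
        obtain ⟨y, rfl⟩ := hx
        exact ⟨⟨y, y.2.1.le, y.2.2.le⟩, hFf y⟩
      · exact ⟨0, p.source⟩
      · exact ⟨1, p.target⟩
  have hcl : closure e = e ∪ {u, v} := by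
    apply Subset.antisymm
    · refine closure_minimal subset_union_left ?_
      rw [← hpr]
      exact (isCompact_range p.continuous).isClosed
    · rintro x (hx | rfl | rfl)
      · exact subset_closure hx
      · exact hu.1
      · exact hv.1
  refine ⟨u, v, p, hpr.trans hcl.symm, ?_, ?_⟩
  · rw [hcl, union_sdiff_left, sdiff_eq_left]
    rw [disjoint_left]
    rintro x (rfl | rfl)
    · exact hu.2
    · exact hv.2
  · intro s t hst
    rcases hpI s with rfl | rfl | ⟨y, hys, hy⟩ <;> rcases hpI t with rfl | rfl | ⟨z, hzt, hz⟩
    · simp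
    · simp
    · rw [hz, p.source] at hst
      exact absurd (hst ▸ hhe z) hu.2
    · simp
    · simp
    · rw [hz, p.target] at hst
      exact absurd (hst ▸ hhe z) hv.2
    · rw [hy, p.source] at hst
      exact absurd (hst ▸ hhe y) hu.2
    · rw [hy, p.target] at hst
      exact absurd (hst ▸ hhe y) hv.2
    · rw [hy, hz] at hst
      left
      apply Subtype.ext
      rw [← hys, ← hzt, hh.injective hst]

end Arcs

open scoped Classical in
theorem sum_incidence_pair {X : Type*} (S : Finset X) {u v : X} (huv : u ≠ v) :
    (∑ w ∈ S, ((if w ∈ ({u, v} : Set X) then 1 else 0) +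
      if ({u, v} : Set X) = {w} then 1 else 0)) =
      (if u ∈ S then 1 else 0) + if v ∈ S then 1 else 0 := by
  have h (w : X) : ((if w ∈ ({u, v} : Set X) then 1 else 0) +
      if ({u, v} : Set X) = {w} then 1 else 0) =
      (if w = u then 1 else 0) + if w = v then 1 else 0 := by
    have hne : ({u, v} : Set X) ≠ {w} := fun h ↦ by
      have hu : u ∈ ({w} : Set X) := h ▸ Set.mem_insert u {v}
      have hv : v ∈ ({w} : Set X) := h ▸ Set.mem_insert_of_mem u rfl
      exact huv (hu.trans hv.symm)
    simp only [hne, mem_insert_iff, mem_singleton_iff, if_false]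
    grind
  simp only [h, Finset.sum_add_distrib, Finset.sum_ite_eq']

section Graph

variable {X : Type*} [TopologicalSpace X] {G V : Set X} {e e' : Set X}

theorem graphEdges_subset (he : e ∈ graphEdges G V) : e ⊆ G \ V := by
  obtain ⟨x, -, rfl⟩ := he
  exact connectedComponentIn_subset _ _

theorem graphEdges_eq_of_mem {x : X} (he : e ∈ graphEdges G V) (he' : e' ∈ graphEdges G V)
    (hx : x ∈ e) (hx' : x ∈ e') : e = e' := by
  obtain ⟨y, -, rfl⟩ := he
  obtain ⟨z, -, rfl⟩ := he'
  rw [connectedComponentIn_eq hx, connectedComponentIn_eq hx']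

theorem IsJordanCurve.closure_sdiff_self [T2Space X] (he : IsJordanCurve e) :
    closure e \ e = ∅ := by
  obtain ⟨φ⟩ := he
  have : CompactSpace e := φ.symm.compactSpace
  rw [(isCompact_iff_compactSpace.2 this).isClosed.closure_eq, sdiff_self]

namespace IsLemniscateGraphWith

variable [T2Space X]

theorem remainder_subset (hG : IsLemniscateGraphWith G V) (he : e ∈ graphEdges G V) :
    closure e \ e ⊆ V := by
  rcases hG.edge_shape e he with h | h
  · simp [h.closure_sdiff_self]
  · exact h.2

theorem closure_edge_subset (hG : IsLemniscateGraphWith G V) (he : e ∈ graphEdges G V) :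
    closure e ⊆ G := fun x hx ↦ by
  by_cases hxe : x ∈ e
  · exact (graphEdges_subset he hxe).1
  · exact hG.vertex_subset (hG.remainder_subset he ⟨hx, hxe⟩)

theorem remainder_eq_empty_or_pair [CompactSpace X] (hG : IsLemniscateGraphWith G V)
    (he : e ∈ graphEdges G V) : closure e \ e = ∅ ∨ ∃ u v, closure e \ e = {u, v} := by
  rcases hG.edge_shape e he with h | h
  · exact .inl h.closure_sdiff_self
  · obtain ⟨u, v, -, -, huv, -⟩ := h.1.exists_path (hG.vertex_finite.subset h.2)
    exact .inr ⟨u, v, huv⟩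

theorem exists_injective_path [CompactSpace X] (hG : IsLemniscateGraphWith G V)
    (he : e ∈ graphEdges G V) {u v : X} (huv : u ≠ v) (h : closure e \ e = {u, v}) :
    ∃ p : Path u v, Function.Injective p ∧ range p = closure e := by
  rcases hG.edge_shape e he with hJ | hA
  · rw [hJ.closure_sdiff_self] at h
    exact absurd h.symm (insert_nonempty _ _).ne_empty
  · obtain ⟨u', v', p, hp, hr, hker⟩ := hA.1.exists_path (hG.vertex_finite.subset hA.2)
    have hne : u' ≠ v' := by
      rintro rfl
      rw [hr, pair_eq_singleton] at h
      have hu : u ∈ ({u'} : Set X) := h ▸ mem_insert u {v}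
      have hv : v ∈ ({u'} : Set X) := h ▸ mem_insert_of_mem u rfl
      exact huv (hu.trans hv.symm)
    have hinj : Function.Injective p := by
      intro s t hst
      rcases hker s t hst with h | ⟨rfl, rfl⟩ | ⟨rfl, rfl⟩
      · exact h
      · exact absurd (by simpa using hst) hne
      · exact absurd (by simpa using hst.symm) hne
    rw [hr, pair_eq_pair_iff] at h
    rcases h with ⟨rfl, rfl⟩ | ⟨rfl, rfl⟩
    · exact ⟨p, hinj, hp⟩
    · refine ⟨p.symm, ?_, by rw [Path.symm_range, hp]⟩
      exact hinj.comp unitInterval.symm_bijective.injective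

end IsLemniscateGraphWith

/-- The simple graph in which two points are adjacent when they are the two ends of an edge of
`(G, V)` other than `e`. -/
def edgeDeletedGraph (G V e : Set X) : SimpleGraph X where
  Adj u v := u ≠ v ∧ ∃ e' ∈ graphEdges G V, e' ≠ e ∧ closure e' \ e' = {u, v}
  symm := ⟨fun u v h ↦ ⟨h.1.symm, by simpa only [pair_comm] using h.2⟩⟩
  loopless := ⟨fun _ h ↦ h.1 rfl⟩

namespace IsLemniscateGraphWith

open scoped Classical in
theorem vertexDegree_eq_sum (hG : IsLemniscateGraphWith G V) (v : X) :
    vertexDegree G V v = ∑ e' ∈ hG.edges_finite.toFinset,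
      ((if v ∈ closure e' \ e' then 1 else 0) + if closure e' \ e' = {v} then 1 else 0) := by
  have key (P : Set X → Prop) [DecidablePred P] : {e ∈ graphEdges G V | P e}.ncard =
      ∑ e' ∈ hG.edges_finite.toFinset, if P e' then 1 else 0 := by
    rw [Finset.sum_boole, Nat.cast_id, ← ncard_coe_finset]
    congr 1
    ext
    simp
  rw [vertexDegree, key, key, Finset.sum_add_distrib]

variable [T2Space X] [CompactSpace X]

/-- Deleting an edge does not disconnect its ends: otherwise the component of one end would have
odd total degree. -/
theorem reachable_edgeDeletedGraph (hG : IsLemniscateGraphWith G V) (he : e ∈ graphEdges G V)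
    {a b : X} (hab : a ≠ b) (h : closure e \ e = {a, b}) :
    (edgeDeletedGraph G V e).Reachable a b := by
  classical
  by_contra hcon
  let S := {v ∈ hG.vertex_finite.toFinset | (edgeDeletedGraph G V e).Reachable a v}
  have hSV : ∀ v ∈ V, v ∈ S ↔ (edgeDeletedGraph G V e).Reachable a v := by
    intro v hv
    simp [S, hv]
  have haS : a ∈ S := (hSV a (hG.remainder_subset he (by simp [h]))).2 .rfl
  have hbS : b ∉ S := mt (hSV b (hG.remainder_subset he (by simp [h]))).1 hcon
  let c : Set X → ℕ := fun e' ↦ ∑ v ∈ S,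
    ((if v ∈ closure e' \ e' then 1 else 0) + if closure e' \ e' = {v} then 1 else 0)
  have hsum : Even (∑ e' ∈ hG.edges_finite.toFinset, c e') := by
    rw [Finset.sum_comm]
    refine Finset.even_sum _ fun v hv ↦ ?_
    rw [← hG.vertexDegree_eq_sum]
    exact hG.degree_even v (by simpa using (Finset.mem_filter.1 hv).1)
  have hce : c e = 1 := by
    simp only [c, h]
    rw [sum_incidence_pair S hab, if_pos haS, if_neg hbS]
  have hc : ∀ e' ∈ graphEdges G V, e' ≠ e → Even (c e') := by
    intro e' he' hne
    rcases hG.remainder_eq_empty_or_pair he' with h' | ⟨u, v, h'⟩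
    · refine Finset.even_sum _ fun w _ ↦ ?_
      simp [h', (singleton_ne_empty w).symm]
    · rcases eq_or_ne u v with rfl | huv
      · refine Finset.even_sum _ fun w _ ↦ ?_
        simp only [h', pair_eq_singleton, mem_singleton_iff, singleton_eq_singleton_iff,
          eq_comm (a := u)]
        exact Even.add_self _
      · have hadj : (edgeDeletedGraph G V e).Adj u v := ⟨huv, e', he', hne, h'⟩
        have hiff : u ∈ S ↔ v ∈ S := by
          rw [hSV u (hG.remainder_subset he' (by simp [h'])),
            hSV v (hG.remainder_subset he' (by simp [h']))]
          exact ⟨fun hu ↦ hu.trans hadj.reachable, fun hv ↦ hv.trans hadj.symm.reachable⟩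
        simp only [c, h']
        rw [sum_incidence_pair S huv, if_congr hiff rfl rfl]
        exact Even.add_self _
  rw [← Finset.add_sum_erase _ _ (hG.edges_finite.mem_toFinset.2 he), hce] at hsum
  have hrest : Even (∑ e' ∈ hG.edges_finite.toFinset.erase e, c e') :=
    Finset.even_sum _ fun e' he' ↦
      hc e' (hG.edges_finite.mem_toFinset.1 (Finset.mem_of_mem_erase he'))
        (Finset.ne_of_mem_erase he')
  rw [Nat.even_add] at hsum
  exact Nat.not_even_one (hsum.2 hrest)

/-- A combinatorial path avoiding the edge `e` is traced out by a simple arc. -/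
theorem exists_injective_path_of_isPath (hG : IsLemniscateGraphWith G V) {u v : X}
    (p : (edgeDeletedGraph G V e).Walk u v) (hp : p.IsPath) :
    u = v ∨ ∃ γ : Path u v, Function.Injective γ ∧ ∀ x ∈ range γ, (x ∈ V ∧ x ∈ p.support) ∨
      ∃ e' ∈ graphEdges G V, e' ≠ e ∧ closure e' \ e' ⊆ {w | w ∈ p.support} ∧ x ∈ e' := by
  induction p with
  | nil => exact .inl rfl
  | @cons u w v hadj p ih =>
    right
    rw [SimpleGraph.Walk.cons_isPath_iff] at hp
    obtain ⟨huw, e₀, he₀, hne, hr⟩ := id hadj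
    obtain ⟨q, hq, hqr⟩ := hG.exists_injective_path he₀ huw hr
    have hwp : w ∈ p.support := p.start_mem_support
    have hrV : ({u, w} : Set X) ⊆ V := hr ▸ hG.remainder_subset he₀
    have hrS : ({u, w} : Set X) ⊆ {z | z ∈ u :: p.support} := by
      rintro z (rfl | rfl)
      · exact List.mem_cons_self
      · exact List.mem_cons_of_mem _ hwp
    have hq' : ∀ x ∈ range q, (x ∈ V ∧ x ∈ u :: p.support) ∨
        ∃ e' ∈ graphEdges G V, e' ≠ e ∧ closure e' \ e' ⊆ {z | z ∈ u :: p.support} ∧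
          x ∈ e' := by
      intro x hx
      rw [hqr] at hx
      by_cases hxe : x ∈ e₀
      · exact .inr ⟨e₀, he₀, hne, hr ▸ hrS, hxe⟩
      · have hx' : x ∈ ({u, w} : Set X) := hr ▸ ⟨hx, hxe⟩
        exact .inl ⟨hrV hx', hrS hx'⟩
    simp only [SimpleGraph.Walk.support_cons]
    rcases ih hp.1 with rfl | ⟨γ, hγ, hγr⟩
    · exact ⟨q, hq, hq'⟩
    · refine ⟨q.trans γ, Path.trans_injective hq hγ ?_, ?_⟩
      · rintro x ⟨hxq, hxγ⟩
        rw [hqr] at hxq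
        rcases hγr x hxγ with ⟨hxV, hxp⟩ | ⟨e', he', -, hsub, hxe'⟩
        · have hx' : x ∈ ({u, w} : Set X) :=
            hr ▸ ⟨hxq, fun hxe ↦ (graphEdges_subset he₀ hxe).2 hxV⟩
          rcases hx' with rfl | hx'
          · exact absurd hxp hp.2
          · exact hx'
        · exfalso
          by_cases hxe : x ∈ e₀
          · obtain rfl := graphEdges_eq_of_mem he₀ he' hxe hxe'
            exact hp.2 (hsub (hr ▸ mem_insert u {w}))
          · exact (graphEdges_subset he' hxe').2 (hG.remainder_subset he₀ ⟨hxq, hxe⟩)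
      · rw [Path.trans_range]
        rintro x (hx | hx)
        · exact hq' x hx
        · rcases hγr x hx with ⟨hxV, hxp⟩ | ⟨e', he', hne', hsub, hxe'⟩
          · exact .inl ⟨hxV, List.mem_cons_of_mem _ hxp⟩
          · exact .inr ⟨e', he', hne', fun z hz ↦ List.mem_cons_of_mem _ (hsub hz), hxe'⟩

theorem exists_isJordanCurve_of_edge (hG : IsLemniscateGraphWith G V)
    (he : e ∈ graphEdges G V) : ∃ γ : Set X, IsJordanCurve γ ∧ e ⊆ γ ∧ γ ⊆ G := by
  rcases hG.edge_shape e he with hJ | hA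
  · exact ⟨e, hJ, Subset.rfl, fun x hx ↦ (graphEdges_subset he hx).1⟩
  obtain ⟨a, b, p, hp, hr, hker⟩ := hA.1.exists_path (hG.vertex_finite.subset hA.2)
  rcases eq_or_ne a b with rfl | hab
  · exact ⟨range p, isJordanCurve_range_of_closed_path p hker, hp ▸ subset_closure,
      hp ▸ hG.closure_edge_subset he⟩
  obtain ⟨q, hq, hqr⟩ := hG.exists_injective_path he hab.symm (hr.trans (pair_comm a b))
  obtain ⟨w, hw⟩ := (hG.reachable_edgeDeletedGraph he hab hr).exists_isPath
  obtain ⟨γ, hγ, hγr⟩ := (hG.exists_injective_path_of_isPath w hw).resolve_left hab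
  have hinter : range γ ∩ range q ⊆ {a, b} := by
    rintro x ⟨hxγ, hxq⟩
    rw [hqr] at hxq
    rw [← hr]
    refine ⟨hxq, fun hxe ↦ ?_⟩
    rcases hγr x hxγ with ⟨hxV, -⟩ | ⟨e', he', hne, -, hxe'⟩
    · exact (graphEdges_subset he hxe).2 hxV
    · exact hne (graphEdges_eq_of_mem he' he hxe' hxe)
  refine ⟨range (γ.trans q),
    isJordanCurve_range_of_closed_path _ (Path.trans_closed_eq hγ hq hinter), ?_, ?_⟩
  · rw [Path.trans_range, hqr]
    exact subset_closure.trans subset_union_right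
  · rw [Path.trans_range, hqr]
    refine union_subset (fun x hx ↦ ?_) (hG.closure_edge_subset he)
    rcases hγr x hx with ⟨hxV, -⟩ | ⟨e', he', -, -, hxe'⟩
    · exact hG.vertex_subset hxV
    · exact (graphEdges_subset he' hxe').1

end IsLemniscateGraphWith

end Graph

/-- Every edge of a lemniscate graph is contained in a Jordan curve lying in the graph. -/
theorem edge_in_jordan_curve
    (G V : Set (OnePoint ℂ)) (hG : IsLemniscateGraphWith G V)
    (e : Set (OnePoint ℂ)) (he : e ∈ graphEdges G V) :
    ∃ γ : Set (OnePoint ℂ), IsJordanCurve γ ∧ e ⊆ γ ∧ γ ⊆ G :=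
  hG.exists_isJordanCurve_of_edge he

end
end

section
/- Let Δ_n := {x ∈ ℝ^{n+1} : x_i ≥ 0 for all i and Σᵢ x_i = 1} be the standard n-simplex, and for each i ∈ {1, …, n+1} let the i-th facet be {x ∈ Δ_n : x_i = 0}. If f : Δ_n → Δ_n is continuous and maps each facet into itself (i.e. for every i and every x ∈ Δ_n with x_i = 0, one has f(x)_i = 0), then f is surjective. -/
open Set

namespace SimplexCochain

section Coboundary

variable {E : Type*}

/-- The mod 2 simplicial coboundary of a function on `k`-tuples of points. -/
def coboundary {k : ℕ} (φ : (Fin k → E) → ZMod 2) (σ : Fin (k + 1) → E) : ZMod 2 :=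
  ∑ i : Fin (k + 1), φ (i.removeNth σ)

/-- Contraction of a cochain against the cone with apex `b`. -/
def contract {k : ℕ} (b : E) (φ : (Fin (k + 1) → E) → ZMod 2) (τ : Fin k → E) : ZMod 2 :=
  φ (Fin.cons b τ)

lemma coboundary_add {k : ℕ} (φ ψ : (Fin k → E) → ZMod 2) :
    coboundary (φ + ψ) = coboundary φ + coboundary ψ := by
  ext σ
  simp [coboundary, Finset.sum_add_distrib]

lemma add_self_eq_zero {X : Type*} (φ : X → ZMod 2) : φ + φ = 0 := by
  ext x
  exact CharTwo.add_self_eq_zero _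

lemma contract_coboundary_zero (b : E) (φ : (Fin 0 → E) → ZMod 2) :
    contract b (coboundary φ) = φ := by
  ext τ
  rw [contract, coboundary, Fin.sum_univ_one]
  exact congrArg φ (Subsingleton.elim _ _)

lemma contract_coboundary {k : ℕ} (b : E) (φ : (Fin (k + 1) → E) → ZMod 2) :
    contract b (coboundary φ) = φ + coboundary (contract b φ) := by
  ext τ
  simp only [contract, coboundary, Pi.add_apply]
  rw [Fin.sum_univ_succ]
  congr 1
  refine Finset.sum_congr rfl fun i _ => congrArg φ ?_
  ext j
  refine Fin.cases ?_ (fun j => ?_) j <;> simp [Fin.removeNth]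

lemma coboundary_eq_contract {k : ℕ} (φ : (Fin k → E) → ZMod 2) (σ : Fin (k + 1) → E) :
    coboundary φ σ = contract (σ 0) (coboundary φ) (Fin.tail σ) := by
  rw [contract, Fin.cons_self_tail]

lemma coboundary_coboundary {k : ℕ} (φ : (Fin k → E) → ZMod 2) :
    coboundary (coboundary φ) = 0 := by
  induction k with
  | zero =>
    ext σ
    rw [coboundary_eq_contract, contract_coboundary, contract_coboundary_zero,
      add_self_eq_zero]
    rfl
  | succ k ih =>
    ext σ
    rw [coboundary_eq_contract, contract_coboundary, contract_coboundary, coboundary_add, ih,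
      add_zero, add_self_eq_zero]
    rfl

end Coboundary

section Subdivision

variable {E : Type*} [NormedAddCommGroup E] [NormedSpace ℝ E]

/-- The barycenter of a tuple of points. -/
noncomputable def barycenter {k : ℕ} (σ : Fin k → E) : E := (k : ℝ)⁻¹ • ∑ i, σ i

/-- The dual of barycentric subdivision: `subdivide φ σ` is the sum of `φ` over the barycentric
subdivision of the affine simplex with vertices `σ`. -/
noncomputable def subdivide : {k : ℕ} → ((Fin k → E) → ZMod 2) → (Fin k → E) → ZMod 2
  | 0, φ => φ
  | _ + 1, φ => fun σ => coboundary (subdivide (contract (barycenter σ) φ)) σ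

lemma subdivide_succ {k : ℕ} (φ : (Fin (k + 1) → E) → ZMod 2) (σ : Fin (k + 1) → E) :
    subdivide φ σ = coboundary (subdivide (contract (barycenter σ) φ)) σ := rfl

lemma subdivide_add {k : ℕ} (φ ψ : (Fin k → E) → ZMod 2) :
    subdivide (φ + ψ) = subdivide φ + subdivide ψ := by
  induction k with
  | zero => rfl
  | succ k ih =>
    ext σ
    have h : contract (barycenter σ) (φ + ψ) =
      contract (barycenter σ) φ + contract (barycenter σ) ψ := rfl
    simp only [subdivide_succ, Pi.add_apply, h, ih, coboundary_add]

lemma subdivide_coboundary {k : ℕ} (φ : (Fin k → E) → ZMod 2) :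
    subdivide (coboundary φ) = coboundary (subdivide φ) := by
  induction k with
  | zero =>
    ext σ
    rw [subdivide_succ, contract_coboundary_zero]
  | succ k ih =>
    ext σ
    rw [subdivide_succ, contract_coboundary, subdivide_add, ih, coboundary_add,
      coboundary_coboundary, add_zero]

lemma barycenter_mem_convexHull {k : ℕ} (σ : Fin (k + 1) → E) :
    barycenter σ ∈ convexHull ℝ (range σ) := by
  rw [barycenter, Finset.smul_sum]
  refine (convex_convexHull ℝ _).sum_mem (fun _ _ => by positivity) ?_
    fun i _ => subset_convexHull ℝ _ (mem_range_self i)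
  simp only [Finset.sum_const, Finset.card_univ, Fintype.card_fin, nsmul_eq_mul]
  exact mul_inv_cancel₀ (by positivity)

lemma dist_vertex_barycenter_le {k : ℕ} {C : ℝ} (σ : Fin (k + 1) → E)
    (hσ : ∀ i j, dist (σ i) (σ j) ≤ C) (i : Fin (k + 1)) :
    dist (σ i) (barycenter σ) ≤ k / (k + 1) * C := by
  have h : σ i - barycenter σ = ((k : ℝ) + 1)⁻¹ • ∑ j, (σ i - σ j) := by
    rw [barycenter, Finset.sum_sub_distrib, smul_sub]
    congr 1
    · simp only [Finset.sum_const, Finset.card_univ, Fintype.card_fin]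
      rw [← Nat.cast_smul_eq_nsmul ℝ, smul_smul]
      push_cast
      rw [inv_mul_cancel₀ (by positivity), one_smul]
    · push_cast
      rfl
  have hsum : ‖∑ j, (σ i - σ j)‖ ≤ k * C := by
    rw [Fin.sum_univ_succAbove _ i, sub_self, zero_add]
    refine (norm_sum_le_of_le _ (n := fun _ => C) fun j _ => ?_).trans (by simp)
    rw [← dist_eq_norm]
    exact hσ _ _
  rw [dist_eq_norm, h, norm_smul, Real.norm_of_nonneg (by positivity)]
  calc ((k : ℝ) + 1)⁻¹ * ‖∑ j, (σ i - σ j)‖ ≤ ((k : ℝ) + 1)⁻¹ * (k * C) := by gcongr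
    _ = k / (k + 1) * C := by ring

lemma dist_barycenter_le {k : ℕ} {C : ℝ} (σ : Fin (k + 1) → E)
    (hσ : ∀ i j, dist (σ i) (σ j) ≤ C) {x : E} (hx : x ∈ convexHull ℝ (range σ)) :
    dist x (barycenter σ) ≤ k / (k + 1) * C := by
  have hsub : range σ ⊆ Metric.closedBall (barycenter σ) (k / (k + 1) * C) := by
    rintro _ ⟨i, rfl⟩
    exact dist_vertex_barycenter_le σ hσ i
  exact convexHull_min hsub (convex_closedBall _ _) hx

/-- If a cochain does not vanish on a subdivided simplex, then it does not vanish on some simplex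
of the subdivision, which lies in the original simplex and has smaller diameter. -/
lemma exists_of_subdivide_ne_zero {n k : ℕ} (hk : k ≤ n + 1) {C : ℝ} (hC : 0 ≤ C)
    (φ : (Fin k → E) → ZMod 2) (σ : Fin k → E) (hσ : ∀ i j, dist (σ i) (σ j) ≤ C)
    (hφ : subdivide φ σ ≠ 0) :
    ∃ τ, φ τ ≠ 0 ∧ range τ ⊆ convexHull ℝ (range σ) ∧
      ∀ i j, dist (τ i) (τ j) ≤ n / (n + 1) * C := by
  induction k with
  | zero => exact ⟨σ, hφ, subset_convexHull ℝ _, fun i => i.elim0⟩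
  | succ k ih =>
    rw [subdivide_succ, coboundary] at hφ
    obtain ⟨i, -, hi⟩ := Finset.exists_ne_zero_of_sum_ne_zero hφ
    obtain ⟨τ, hτ, hmem, hdist⟩ := ih (by omega) _ _ (fun _ _ => hσ _ _) hi
    have hmem' : range τ ⊆ convexHull ℝ (range σ) :=
      hmem.trans (convexHull_mono (range_comp_subset_range i.succAbove σ))
    have hratio : (k : ℝ) / (k + 1) ≤ n / (n + 1) := by
      have : (k : ℝ) ≤ n := by exact_mod_cast (by omega : k ≤ n)
      rw [div_le_div_iff₀ (by positivity) (by positivity)]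
      linarith
    have hb : ∀ j, dist (τ j) (barycenter σ) ≤ n / (n + 1) * C := fun j =>
      (dist_barycenter_le σ hσ (hmem' (mem_range_self j))).trans (by gcongr)
    refine ⟨Fin.cons (barycenter σ) τ, hτ, ?_, fun i j => ?_⟩
    · rw [Fin.range_cons]
      exact insert_subset (barycenter_mem_convexHull σ) hmem'
    · refine Fin.cases ?_ (fun i => ?_) i <;> refine Fin.cases ?_ (fun j => ?_) j
      · simp only [dist_self]
        positivity
      · simpa [dist_comm] using hb j
      · simpa using hb i
      · simpa using hdist i j

lemma exists_of_iterate_subdivide_ne_zero {n k : ℕ} (hk : k ≤ n + 1) {C : ℝ} (hC : 0 ≤ C) (m : ℕ)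
    (φ : (Fin k → E) → ZMod 2) (σ : Fin k → E) (hσ : ∀ i j, dist (σ i) (σ j) ≤ C)
    (hφ : subdivide^[m] φ σ ≠ 0) :
    ∃ τ, φ τ ≠ 0 ∧ range τ ⊆ convexHull ℝ (range σ) ∧
      ∀ i j, dist (τ i) (τ j) ≤ (n / (n + 1)) ^ m * C := by
  induction m generalizing φ with
  | zero => exact ⟨σ, hφ, subset_convexHull ℝ _, by simpa using hσ⟩
  | succ m ih =>
    obtain ⟨τ, hτ, hmem, hdist⟩ := ih (subdivide φ) hφ
    obtain ⟨τ', hτ', hmem', hdist'⟩ :=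
      exists_of_subdivide_ne_zero hk (by positivity) φ τ hdist hτ
    refine ⟨τ', hτ', hmem'.trans (convexHull_min hmem (convex_convexHull ℝ _)), fun i j => ?_⟩
    exact (hdist' i j).trans_eq (by ring)

lemma iterate_subdivide_eq_zero {k : ℕ} (m : ℕ) (φ : (Fin k → E) → ZMod 2) (σ : Fin k → E)
    (hφ : ∀ τ, range τ ⊆ convexHull ℝ (range σ) → φ τ = 0) : subdivide^[m] φ σ = 0 := by
  by_contra h
  have hσ : ∀ i j, dist (σ i) (σ j) ≤ ∑ i, ∑ j, dist (σ i) (σ j) := fun i j =>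
    (Finset.single_le_sum (f := fun j => dist (σ i) (σ j)) (fun _ _ => dist_nonneg)
      (Finset.mem_univ j)).trans
    (Finset.single_le_sum (f := fun i => ∑ j, dist (σ i) (σ j))
      (fun _ _ => Finset.sum_nonneg fun _ _ => dist_nonneg) (Finset.mem_univ i))
  obtain ⟨τ, hτ, hmem, -⟩ := exists_of_iterate_subdivide_ne_zero (Nat.le_succ k)
    (Finset.sum_nonneg fun _ _ => Finset.sum_nonneg fun _ _ => dist_nonneg) m φ σ hσ h
  exact hτ (hφ τ hmem)

lemma iterate_subdivide_add {k : ℕ} (m : ℕ) (φ ψ : (Fin k → E) → ZMod 2) :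
    subdivide^[m] (φ + ψ) = subdivide^[m] φ + subdivide^[m] ψ := by
  induction m generalizing φ ψ with
  | zero => rfl
  | succ m ih => simp only [Function.iterate_succ_apply, subdivide_add, ih]

lemma iterate_subdivide_coboundary {k : ℕ} (m : ℕ) (φ : (Fin k → E) → ZMod 2) :
    subdivide^[m] (coboundary φ) = coboundary (subdivide^[m] φ) := by
  induction m generalizing φ with
  | zero => rfl
  | succ m ih => simp only [Function.iterate_succ_apply, subdivide_coboundary, ih]

lemma iterate_subdivide_congr {k : ℕ} (m : ℕ) (φ ψ : (Fin k → E) → ZMod 2) (σ : Fin k → E)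
    (h : ∀ τ, range τ ⊆ convexHull ℝ (range σ) → φ τ = ψ τ) :
    subdivide^[m] φ σ = subdivide^[m] ψ σ := by
  have h0 : subdivide^[m] (φ + ψ) σ = 0 := iterate_subdivide_eq_zero m _ σ fun τ hτ => by
    rw [Pi.add_apply, h τ hτ, CharTwo.add_self_eq_zero]
  rw [iterate_subdivide_add, Pi.add_apply] at h0
  exact CharTwo.add_eq_zero.mp h0

end Subdivision

section Labelling

variable {E : Type*}

/-- The cochain detecting the tuples whose labels are exactly `0, …, k - 1`. -/
def rainbow (L : E → ℕ) (k : ℕ) (τ : Fin k → E) : ZMod 2 :=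
  Matrix.det (Matrix.of fun i j : Fin k => if L (τ i) = j then (1 : ZMod 2) else 0)

lemma rainbow_eq_zero {L : E → ℕ} {k : ℕ} {τ : Fin k → E} (j : Fin k)
    (h : ∀ i, L (τ i) ≠ j) : rainbow L k τ = 0 :=
  Matrix.det_eq_zero_of_column_eq_zero j fun i => by simp [h i]

lemma coboundary_rainbow {L : E → ℕ} {k : ℕ} {τ : Fin (k + 1) → E}
    (h : ∀ i, L (τ i) ≤ k) : coboundary (rainbow L k) τ = rainbow L (k + 1) τ := by
  let A : Matrix (Fin (k + 1)) (Fin (k + 1)) (ZMod 2) :=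
    Matrix.of fun i j => if L (τ i) = j then 1 else 0
  have hrow : ∀ i, ∑ j, A i j = 1 := fun i => by
    rw [Finset.sum_eq_single ⟨L (τ i), Nat.lt_succ_of_le (h i)⟩]
    · simp [A]
    · intro j _ hj
      simp only [A, Matrix.of_apply, ite_eq_right_iff]
      exact fun hL => absurd (Fin.ext hL.symm) hj
    · simp
  have hdet : (A.updateCol (Fin.last k) fun _ => 1).det = A.det := by
    have := Matrix.det_updateCol_sum A (Fin.last k) (fun _ => 1)
    simpa [hrow] using this
  change _ = A.det
  rw [← hdet, Matrix.det_succ_column _ (Fin.last k)]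
  refine Finset.sum_congr rfl fun i _ => ?_
  have hsign : (-1 : ZMod 2) = 1 := rfl
  rw [hsign, one_pow, one_mul, Matrix.updateCol_self, one_mul, rainbow]
  congr 1
  ext a b
  simp [A, Fin.removeNth]
  rfl

end Labelling

section Sperner

variable {n : ℕ}

/-- The first `k` vertices of the standard simplex. -/
def vertex (n k : ℕ) (i : Fin k) : Fin (n + 1) → ℝ := fun j => if (j : ℕ) = i then 1 else 0

lemma vertex_mem {k : ℕ} (hk : k ≤ n + 1) (i : Fin k) :
    vertex n k i ∈ stdSimplex ℝ (Fin (n + 1)) := by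
  have : vertex n k i = Pi.single (Fin.castLE hk i) 1 := by
    ext j
    simp [vertex, Pi.single_apply, Fin.ext_iff]
  rw [this]
  exact single_mem_stdSimplex ℝ _

lemma convexHull_subset_stdSimplex {k l : ℕ} (hk : k ≤ n + 1) (g : Fin l → Fin k) :
    convexHull ℝ (range (vertex n k ∘ g)) ⊆ stdSimplex ℝ (Fin (n + 1)) :=
  convexHull_min (range_subset_iff.mpr fun _ => vertex_mem hk _) (convex_stdSimplex ℝ _)

lemma eq_zero_of_mem_convexHull {k l : ℕ} (g : Fin l → Fin k) (j : Fin (n + 1))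
    (hj : ∀ i, (j : ℕ) ≠ g i) {x : Fin (n + 1) → ℝ}
    (hx : x ∈ convexHull ℝ (range (vertex n k ∘ g))) : x j = 0 := by
  have hsub : range (vertex n k ∘ g) ⊆ {x | x j = 0} := by
    rintro _ ⟨i, rfl⟩
    simp [vertex, hj i]
  exact convexHull_min hsub
    (convex_hyperplane (LinearMap.proj (R := ℝ) (φ := fun _ : Fin (n + 1) => ℝ) j).isLinear 0) hx

/-- Sperner's lemma, counted modulo 2. -/
lemma iterate_subdivide_rainbow (L : (Fin (n + 1) → ℝ) → Fin (n + 1))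
    (hL : ∀ x ∈ stdSimplex ℝ (Fin (n + 1)), x (L x) ≠ 0) (m : ℕ) {k : ℕ} (hk : k ≤ n + 1) :
    subdivide^[m] (rainbow (fun x => (L x : ℕ)) k) (vertex n k) = 1 := by
  induction k with
  | zero =>
    have hid : ∀ φ : (Fin 0 → Fin (n + 1) → ℝ) → ZMod 2, subdivide^[m] φ = φ := fun φ =>
      Function.iterate_fixed rfl m
    rw [hid, rainbow, Matrix.det_isEmpty]
  | succ k ih =>
    rw [← iterate_subdivide_congr m (coboundary (rainbow (fun x => (L x : ℕ)) k)),
      iterate_subdivide_coboundary, coboundary, Finset.sum_eq_single (Fin.last k)]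
    · convert ih (by omega) using 2
      ext i
      simp [Fin.removeNth, vertex]
    · intro i _ hi
      refine iterate_subdivide_eq_zero m _ _ fun τ hτ => ?_
      have hik : (i : ℕ) < k := by
        have := Fin.val_ne_iff.mpr hi
        simp only [Fin.val_last] at this
        omega
      refine rainbow_eq_zero ⟨i, hik⟩ fun a ha => ?_
      have hmem := hτ (mem_range_self a)
      refine hL _ (convexHull_subset_stdSimplex hk i.succAbove hmem)
        (eq_zero_of_mem_convexHull i.succAbove _ (fun b hb => ?_) hmem)
      exact Fin.succAbove_ne i b (Fin.ext (hb.symm.trans ha))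
    · simp
    · intro τ hτ
      refine coboundary_rainbow fun i => ?_
      by_contra! hi
      have hmem := hτ (mem_range_self i)
      exact hL _ (convexHull_subset_stdSimplex hk id hmem)
        (eq_zero_of_mem_convexHull id _ (fun b hb => by simp only [id] at hb; omega) hmem)

/-- A Sperner labelling of the standard simplex admits rainbow families of arbitrarily small
diameter. -/
lemma exists_rainbow (L : (Fin (n + 1) → ℝ) → Fin (n + 1))
    (hL : ∀ x ∈ stdSimplex ℝ (Fin (n + 1)), x (L x) ≠ 0) (m : ℕ) :
    ∃ p : Fin (n + 1) → Fin (n + 1) → ℝ, (∀ j, p j ∈ stdSimplex ℝ (Fin (n + 1))) ∧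
      (∀ j, L (p j) = j) ∧ ∀ i j, dist (p i) (p j) ≤ ((n : ℝ) / (n + 1)) ^ m := by
  have hdist : ∀ i j, dist (vertex n (n + 1) i) (vertex n (n + 1) j) ≤ 1 := fun i j => by
    refine (dist_pi_le_iff zero_le_one).mpr fun a => ?_
    simp only [vertex]
    split_ifs <;> simp
  obtain ⟨τ, hτ, hmem, hτd⟩ := exists_of_iterate_subdivide_ne_zero le_rfl zero_le_one m _ _ hdist
    (by rw [iterate_subdivide_rainbow L hL m le_rfl]; exact one_ne_zero)
  have hsurj : ∀ j, ∃ i, L (τ i) = j := fun j => by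
    by_contra! h
    exact hτ (rainbow_eq_zero j fun i => Fin.val_ne_iff.mpr (h i))
  choose g hg using hsurj
  exact ⟨fun j => τ (g j),
    fun j => convexHull_subset_stdSimplex le_rfl id (hmem (mem_range_self _)), hg,
    fun i j => by simpa using hτd (g i) (g j)⟩

end Sperner

end SimplexCochain

open Filter Topology in
/-- A continuous self-map of the standard `n`-simplex that maps each facet
`{x : x_i = 0}` into itself is surjective. -/
theorem simplex_facet_preserving_surjective
    (n : ℕ) (f : (Fin (n + 1) → ℝ) → (Fin (n + 1) → ℝ))
    (hmap : Set.MapsTo f (stdSimplex ℝ (Fin (n + 1))) (stdSimplex ℝ (Fin (n + 1))))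
    (hcont : ContinuousOn f (stdSimplex ℝ (Fin (n + 1))))
    (hfacet : ∀ i : Fin (n + 1), ∀ x ∈ stdSimplex ℝ (Fin (n + 1)), x i = 0 → f x i = 0) :
    stdSimplex ℝ (Fin (n + 1)) ⊆ f '' stdSimplex ℝ (Fin (n + 1)) := by
  intro y hy
  have hlabel : ∀ x, ∃ i, x ∈ stdSimplex ℝ (Fin (n + 1)) → f x i ≠ 0 ∧ y i ≤ f x i := by
    intro x
    by_cases hx : x ∈ stdSimplex ℝ (Fin (n + 1))
    · obtain ⟨hpos, hsum⟩ := hmap hx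
      by_contra! h
      have hle : ∀ i, f x i ≤ y i := fun i => by
        by_cases h0 : f x i = 0
        · exact h0 ▸ hy.1 i
        · exact ((h i).2 h0).le
      obtain ⟨i, -, hi⟩ := Finset.exists_ne_zero_of_sum_ne_zero (hsum ▸ one_ne_zero)
      have := Finset.sum_lt_sum (fun j _ => hle j) ⟨i, Finset.mem_univ i, (h i).2 hi⟩
      rw [hsum, hy.2] at this
      exact this.false
    · exact ⟨0, fun h => absurd h hx⟩
  choose L hL using hlabel
  choose p hp hpL hpd using SimplexCochain.exists_rainbow L
    fun x hx h0 => (hL x hx).1 (hfacet _ x hx h0)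
  obtain ⟨x, hx, u, hu, hlim⟩ := (isCompact_stdSimplex ℝ (Fin (n + 1))).tendsto_subseq
    fun m => hp m 0
  have hratio : Tendsto (fun m => ((n : ℝ) / (n + 1)) ^ m) atTop (𝓝 0) :=
    tendsto_pow_atTop_nhds_zero_of_lt_one (by positivity)
      ((div_lt_one (by positivity)).mpr (lt_add_one _))
  have hlim' : ∀ j, Tendsto (fun m => p (u m) j) atTop (𝓝 x) := fun j =>
    hlim.congr_dist (squeeze_zero (fun _ => dist_nonneg) (fun m => hpd (u m) 0 j)
      (hratio.comp hu.tendsto_atTop))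
  have hle : ∀ j, y j ≤ f x j := fun j => by
    have hfx : Tendsto (fun m => f (p (u m) j)) atTop (𝓝 (f x)) :=
      (hcont x hx).tendsto.comp
        (tendsto_nhdsWithin_iff.mpr ⟨hlim' j, Eventually.of_forall fun m => hp (u m) j⟩)
    refine ge_of_tendsto' (tendsto_pi_nhds.mp hfx j) fun m => ?_
    have := (hL _ (hp (u m) j)).2
    rwa [hpL] at this
  refine ⟨x, hx, funext fun j => ?_⟩
  have hsum : ∑ i, y i = ∑ i, f x i := hy.2.trans (hmap hx).2.symm
  exact ((Finset.sum_eq_sum_iff_of_le fun i _ => hle i).mp hsum j (Finset.mem_univ j)).symm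
end

section
/- Let F : [0,1]ⁿ → [0,∞)ⁿ be a continuous map such that for every j ∈ {1, …, n} and every x ∈ [0,1]ⁿ, F_j(x) = 0 if and only if x_j = 0. Then there exists δ > 0 such that every diagonal point (y, y, …, y) ∈ ℝⁿ with 0 ≤ y < δ lies in F([0,1]ⁿ). -/
open Set

/-- Forward difference of `f` in the direction of the `i`-th coordinate. -/
def gridDiff {ι : Type*} [DecidableEq ι] (i : ι) (f : (ι → ℕ) → ZMod 2) (x : ι → ℕ) : ZMod 2 :=
  f (x + Pi.single i 1) - f x

/-- The coefficient in the directions `S` of the discrete exterior product mod 2 of the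
differentials of the functions `l a`, `a ∈ L`. -/
def gridWedge {ι : Type*} [DecidableEq ι] (l : ι → (ι → ℕ) → ZMod 2) :
    List ι → Finset ι → (ι → ℕ) → ZMod 2
  | [], _, _ => 1
  | a :: L, S, x => ∑ i ∈ S, gridDiff i (l a) x * gridWedge l L (S.erase i) (x + Pi.single i 1)

/-- The points of the grid whose coordinates in `S` are less than `k` and whose other coordinates
agree with those of `b`. -/
def gridBox {ι : Type*} [Fintype ι] [DecidableEq ι] (k : ℕ) (S : Finset ι) (b : ι → ℕ) :
    Finset (ι → ℕ) :=
  Fintype.piFinset fun i => if i ∈ S then Finset.range k else {b i}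

section Grid

variable {ι : Type*} [DecidableEq ι]

theorem sum_erase_symmetric_eq_zero (S : Finset ι) (h : ι → ι → ZMod 2)
    (hsymm : ∀ i j, h i j = h j i) : ∑ i ∈ S, ∑ j ∈ S.erase i, h i j = 0 := by
  rw [Finset.sum_sigma']
  refine Finset.sum_involution (fun p _ => ⟨p.2, p.1⟩) ?_ ?_ ?_ ?_
  · rintro ⟨i, j⟩ _
    simp only [hsymm j i]
    exact CharTwo.add_self_eq_zero _
  · rintro ⟨i, j⟩ hp _ heq
    simp only [Finset.mem_sigma, Finset.mem_erase] at hp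
    simp only [Sigma.mk.injEq] at heq
    exact hp.2.1 heq.1
  · rintro ⟨i, j⟩ hp
    simp only [Finset.mem_sigma, Finset.mem_erase] at hp ⊢
    exact ⟨hp.2.2, hp.2.1.symm, hp.1⟩
  · rintro ⟨i, j⟩ _
    rfl

/-- The discrete exterior product of exact forms is closed. -/
theorem sum_gridDiff_gridWedge (l : ι → (ι → ℕ) → ZMod 2) (L : List ι) (S : Finset ι)
    (x : ι → ℕ) : ∑ i ∈ S, gridDiff i (gridWedge l L (S.erase i)) x = 0 := by
  induction L generalizing S x with
  | nil => simp [gridDiff, gridWedge]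
  | cons a L ih =>
    have hsplit : ∀ i ∈ S, gridDiff i (gridWedge l (a :: L) (S.erase i)) x =
        ∑ j ∈ S.erase i, gridDiff i (gridDiff j (l a)) x *
          gridWedge l L ((S.erase i).erase j) (x + Pi.single i 1 + Pi.single j 1) +
        ∑ j ∈ S.erase i, gridDiff j (l a) x *
          gridDiff i (gridWedge l L ((S.erase j).erase i)) (x + Pi.single j 1) := by
      intro i _
      simp only [gridWedge, gridDiff]
      rw [← Finset.sum_sub_distrib, ← Finset.sum_add_distrib]
      refine Finset.sum_congr rfl fun j _ => ?_
      rw [Finset.erase_right_comm (a := j), add_right_comm x (Pi.single j 1)]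
      ring
    rw [Finset.sum_congr rfl hsplit, Finset.sum_add_distrib,
      sum_erase_symmetric_eq_zero, zero_add]
    · rw [Finset.sum_comm' (t' := S) (s' := fun j => S.erase j)]
      · refine Finset.sum_eq_zero fun j _ => ?_
        rw [← Finset.mul_sum, ih, mul_zero]
      · intro i j
        simp only [Finset.mem_erase]
        tauto
    · intro i j
      rw [Finset.erase_right_comm, add_right_comm x]
      simp only [gridDiff]
      rw [add_right_comm x (Pi.single j 1)]
      ring

/-- A discrete exterior product of differentials is exact. -/
theorem gridWedge_cons_eq_sum_gridDiff (l : ι → (ι → ℕ) → ZMod 2) (a : ι) (L : List ι)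
    (S : Finset ι) (x : ι → ℕ) : gridWedge l (a :: L) S x =
      ∑ i ∈ S, gridDiff i (fun y => l a y * gridWedge l L (S.erase i) y) x := by
  have hsplit : ∀ i ∈ S, gridDiff i (fun y => l a y * gridWedge l L (S.erase i) y) x =
      gridDiff i (l a) x * gridWedge l L (S.erase i) (x + Pi.single i 1) +
        l a x * gridDiff i (gridWedge l L (S.erase i)) x := by
    intro i _
    simp only [gridDiff]
    ring
  rw [Finset.sum_congr rfl hsplit, Finset.sum_add_distrib, ← Finset.mul_sum,
    sum_gridDiff_gridWedge, mul_zero, add_zero, gridWedge]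

/-- A nonzero discrete exterior product witnesses a change of each factor inside the unit cube. -/
theorem exists_ne_of_gridWedge_ne_zero (l : ι → (ι → ℕ) → ZMod 2) (L : List ι) (S : Finset ι)
    (x : ι → ℕ) (hx : gridWedge l L S x ≠ 0) (a : ι) (ha : a ∈ L) :
    ∃ y : ι → ℕ, ∃ i ∈ S, (∀ j, x j ≤ y j) ∧ (∀ j, (y + Pi.single i 1 : ι → ℕ) j ≤ x j + 1) ∧
      (∀ j ∉ S, y j = x j) ∧ l a (y + Pi.single i 1) ≠ l a y := by
  induction L generalizing S x with
  | nil => simp at ha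
  | cons c L ih =>
    obtain ⟨i, hi, hne⟩ := Finset.exists_ne_zero_of_sum_ne_zero hx
    rcases List.mem_cons.1 ha with rfl | ha
    · refine ⟨x, i, hi, fun _ => le_rfl, fun j => ?_, fun _ _ => rfl, ?_⟩
      · by_cases hij : j = i
        · subst hij; simp
        · simp [hij]
      · exact fun h => hne (by simp [gridDiff, h])
    · obtain ⟨y, m, hm, hlow, hup, hfix, hl⟩ := ih _ _ (right_ne_zero_of_mul hne) ha
      have hmS := Finset.mem_erase.1 hm
      refine ⟨y, m, hmS.2, fun j => le_trans (by simp) (hlow j), fun j => ?_, fun j hj => ?_, hl⟩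
      · by_cases hij : j = i
        · subst hij
          have := hfix j (by simp)
          simp [hmS.1.symm, this]
        · simpa [hij] using hup j
      · have hji : j ≠ i := fun h => hj (h ▸ hi)
        simpa [hji] using hfix j (fun h => hj (Finset.mem_of_mem_erase h))

variable [Fintype ι]

theorem mem_gridBox {k : ℕ} {S : Finset ι} {b x : ι → ℕ} :
    x ∈ gridBox k S b ↔ (∀ i ∈ S, x i < k) ∧ ∀ i ∉ S, x i = b i := by
  simp only [gridBox, Fintype.mem_piFinset]
  constructor
  · intro h
    exact ⟨fun i hi => by simpa [hi] using h i, fun i hi => by simpa [hi] using h i⟩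
  · rintro ⟨h₁, h₂⟩ i
    by_cases hi : i ∈ S
    · simpa [hi] using h₁ i hi
    · simpa [hi] using h₂ i hi

theorem sum_gridBox_eq_sum_range {k : ℕ} {S : Finset ι} (b : ι → ℕ) {i : ι} (hi : i ∈ S)
    (h : (ι → ℕ) → ZMod 2) : ∑ x ∈ gridBox k S b, h x =
      ∑ t ∈ Finset.range k, ∑ x ∈ gridBox k (S.erase i) (Function.update b i t), h x := by
  have hmaps : ∀ x ∈ gridBox k S b, x i ∈ Finset.range k := fun x hx =>
    Finset.mem_range.2 ((mem_gridBox.1 hx).1 i hi)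
  rw [← Finset.sum_fiberwise_of_maps_to hmaps]
  refine Finset.sum_congr rfl fun t ht => Finset.sum_congr ?_ fun _ _ => rfl
  have ht := Finset.mem_range.1 ht
  ext x
  simp only [Finset.mem_filter, mem_gridBox, Finset.mem_erase]
  constructor
  · rintro ⟨⟨h₁, h₂⟩, rfl⟩
    refine ⟨fun j hj => h₁ j hj.2, fun j hj => ?_⟩
    by_cases hji : j = i
    · subst hji; simp
    · simpa [hji] using h₂ j (fun h => hj ⟨hji, h⟩)
  · rintro ⟨h₁, h₂⟩
    have hxi : x i = t := by simpa using h₂ i (by simp)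
    refine ⟨⟨fun j hj => ?_, fun j hj => ?_⟩, hxi⟩
    · by_cases hji : j = i
      · subst hji; omega
      · exact h₁ j ⟨hji, hj⟩
    · have hji : j ≠ i := fun h => hj (h ▸ hi)
      simpa [hji] using h₂ j (fun h => hj h.2)

theorem sum_gridBox_shift {k : ℕ} {S : Finset ι} (b : ι → ℕ) {i : ι} (hi : i ∉ S) (t : ℕ)
    (g : (ι → ℕ) → ZMod 2) :
    ∑ x ∈ gridBox k S (Function.update b i t), g (x + Pi.single i 1) =
      ∑ x ∈ gridBox k S (Function.update b i (t + 1)), g x := by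
  have hmem : ∀ (s : ℕ) (x : ι → ℕ), x ∈ gridBox k S (Function.update b i s) ↔
      x i = s ∧ (∀ j ∈ S, x j < k) ∧ ∀ j ∉ S, j ≠ i → x j = b j := by
    intro s x
    rw [mem_gridBox]
    constructor
    · rintro ⟨h₁, h₂⟩
      exact ⟨by simpa using h₂ i hi, h₁, fun j hj hji => by simpa [hji] using h₂ j hj⟩
    · rintro ⟨h₀, h₁, h₂⟩
      refine ⟨h₁, fun j hj => ?_⟩
      by_cases hji : j = i
      · subst hji; simpa using h₀
      · simpa [hji] using h₂ j hj hji
  have hne : ∀ j ∈ S, j ≠ i := fun j hj h => hi (h ▸ hj)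
  refine Finset.sum_bij' (fun x _ => x + Pi.single i 1) (fun x _ => x - Pi.single i 1)
    ?_ ?_ ?_ ?_ (fun _ _ => rfl)
  · intro x hx
    obtain ⟨h₀, h₁, h₂⟩ := (hmem _ _).1 hx
    refine (hmem _ _).2 ⟨by simp [h₀], fun j hj => ?_, fun j hj hji => ?_⟩
    · simpa [hne j hj] using h₁ j hj
    · simpa [hji] using h₂ j hj hji
  · intro x hx
    obtain ⟨h₀, h₁, h₂⟩ := (hmem _ _).1 hx
    refine (hmem _ _).2 ⟨by simp [h₀], fun j hj => ?_, fun j hj hji => ?_⟩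
    · simpa [hne j hj] using h₁ j hj
    · simpa [hji] using h₂ j hj hji
  · intro x _
    simp
  · intro x hx
    obtain ⟨h₀, -, -⟩ := (hmem _ _).1 hx
    funext j
    by_cases hji : j = i
    · subst hji; simp [h₀]
    · simp [hji]

theorem sum_gridBox_gridDiff {k : ℕ} {S : Finset ι} (b : ι → ℕ) {i : ι} (hi : i ∈ S)
    (g : (ι → ℕ) → ZMod 2) : ∑ x ∈ gridBox k S b, gridDiff i g x =
      ∑ x ∈ gridBox k (S.erase i) (Function.update b i k), g x -
        ∑ x ∈ gridBox k (S.erase i) (Function.update b i 0), g x := by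
  rw [sum_gridBox_eq_sum_range b hi]
  simp only [gridDiff, Finset.sum_sub_distrib, sum_gridBox_shift b (Finset.notMem_erase i S)]
  rw [← Finset.sum_sub_distrib]
  exact Finset.sum_range_sub
    (fun t => ∑ x ∈ gridBox k (S.erase i) (Function.update b i t), g x) k

/-- If each `l a` is `0` on the face `x a = 0` and `1` on the face `x a = k`, then the discrete
exterior product of their differentials has total mass `1`. -/
theorem sum_gridBox_gridWedge (k : ℕ) (l : ι → (ι → ℕ) → ZMod 2)
    (hl₀ : ∀ a x, x a = 0 → l a x = 0) (hl₁ : ∀ a x, x a = k → l a x = 1)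
    (L : List ι) (hL : L.Nodup) (b : ι → ℕ) :
    ∑ x ∈ gridBox k L.toFinset b, gridWedge l L L.toFinset x = 1 := by
  induction L generalizing b with
  | nil => simp [gridWedge, gridBox]
  | cons a L ih =>
    obtain ⟨haL, hL⟩ := List.nodup_cons.1 hL
    set S := (a :: L).toFinset with hS
    have haS : a ∈ S := by simp [hS]
    have herase : S.erase a = L.toFinset := by
      rw [hS, List.toFinset_cons, Finset.erase_insert (by simpa using haL)]
    simp only [gridWedge_cons_eq_sum_gridDiff]
    rw [Finset.sum_comm, Finset.sum_eq_single_of_mem a haS]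
    · have hface : ∀ c, ∀ x ∈ gridBox k L.toFinset (Function.update b a c), x a = c := by
        intro c x hx
        simpa using (mem_gridBox.1 hx).2 a (by simpa using haL)
      have h₀ : ∑ x ∈ gridBox k L.toFinset (Function.update b a 0),
          l a x * gridWedge l L L.toFinset x = 0 :=
        Finset.sum_eq_zero fun x hx => by rw [hl₀ a x (hface 0 x hx), zero_mul]
      have h₁ : ∑ x ∈ gridBox k L.toFinset (Function.update b a k),
          l a x * gridWedge l L L.toFinset x = 1 := by
        rw [← ih hL (Function.update b a k)]
        exact Finset.sum_congr rfl fun x hx => by rw [hl₁ a x (hface k x hx), one_mul]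
      rw [sum_gridBox_gridDiff b haS, herase, h₀, h₁, sub_zero]
    · intro i hi hia
      have hiL : i ∈ L := by simpa [hS, hia] using hi
      have hvanish : ∀ c, (∀ x y : ι → ℕ, x i = c → y i = c → l i x = l i y) →
          ∑ x ∈ gridBox k (S.erase i) (Function.update b i c),
            l a x * gridWedge l L (S.erase i) x = 0 := by
        intro c hc
        refine Finset.sum_eq_zero fun x hx => ?_
        have hxi : x i = c := by simpa using (mem_gridBox.1 hx).2 i (by simp)
        by_contra hne
        obtain ⟨y, m, hm, -, -, hfix, hly⟩ :=
          exists_ne_of_gridWedge_ne_zero l L _ x (right_ne_zero_of_mul hne) i hiL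
        have hyi : y i = c := (hfix i (by simp)).trans hxi
        refine hly (hc _ _ ?_ hyi)
        simp [(Finset.mem_erase.1 hm).1.symm, hyi]
      rw [sum_gridBox_gridDiff b hi, hvanish k, hvanish 0, sub_zero]
      · exact fun x y hx hy => (hl₀ i x hx).trans (hl₀ i y hy).symm
      · exact fun x y hx hy => (hl₁ i x hx).trans (hl₁ i y hy).symm

/-- A cubical Sperner lemma: some unit cube of the grid carries both labels in each direction. -/
theorem exists_cube_both_labels (k : ℕ) (l : ι → (ι → ℕ) → ZMod 2)
    (hl₀ : ∀ a x, x a = 0 → l a x = 0) (hl₁ : ∀ a x, x a = k → l a x = 1) :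
    ∃ x : ι → ℕ, (∀ i, x i < k) ∧ ∀ a,
      (∃ y, (∀ j, x j ≤ y j ∧ y j ≤ x j + 1) ∧ l a y = 0) ∧
      (∃ y, (∀ j, x j ≤ y j ∧ y j ≤ x j + 1) ∧ l a y = 1) := by
  have hsum := sum_gridBox_gridWedge k l hl₀ hl₁ Finset.univ.toList (Finset.nodup_toList _) 0
  rw [Finset.toList_toFinset] at hsum
  obtain ⟨x, hx, hne⟩ := Finset.exists_ne_zero_of_sum_ne_zero (hsum ▸ one_ne_zero)
  refine ⟨x, fun i => (mem_gridBox.1 hx).1 i (Finset.mem_univ i), fun a => ?_⟩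
  obtain ⟨y, i, -, hlow, hup, -, hly⟩ :=
    exists_ne_of_gridWedge_ne_zero l _ _ x hne a (by simp)
  have hy : ∀ j, x j ≤ y j ∧ y j ≤ x j + 1 := fun j =>
    ⟨hlow j, le_trans (by simp) (hup j)⟩
  have hy' : ∀ j, x j ≤ (y + Pi.single i 1 : ι → ℕ) j ∧
      (y + Pi.single i 1 : ι → ℕ) j ≤ x j + 1 := fun j =>
    ⟨(hlow j).trans (by simp), hup j⟩
  have hcases : ∀ u v : ZMod 2, u ≠ v → (u = 0 ∧ v = 1) ∨ (u = 1 ∧ v = 0) := by decide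
  rcases hcases _ _ hly with ⟨h₀, h₁⟩ | ⟨h₁, h₀⟩
  · exact ⟨⟨_, hy', h₀⟩, ⟨_, hy, h₁⟩⟩
  · exact ⟨⟨_, hy, h₀⟩, ⟨_, hy', h₁⟩⟩

open Filter Topology in
/-- The **Poincaré–Miranda theorem** on the unit cube. -/
theorem poincare_miranda (G : (ι → ℝ) → (ι → ℝ))
    (hcont : ContinuousOn G (Set.Icc (0 : ι → ℝ) 1))
    (hG₀ : ∀ x ∈ Set.Icc (0 : ι → ℝ) 1, ∀ j, x j = 0 → G x j ≤ 0)
    (hG₁ : ∀ x ∈ Set.Icc (0 : ι → ℝ) 1, ∀ j, x j = 1 → 0 ≤ G x j) :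
    ∃ x ∈ Set.Icc (0 : ι → ℝ) 1, G x = 0 := by
  let p : ℕ → (ι → ℕ) → ι → ℝ := fun k x i => (x i : ℝ) / ((k : ℝ) + 1)
  have hp : ∀ k (x : ι → ℕ), (∀ i, x i ≤ k + 1) → p k x ∈ Set.Icc (0 : ι → ℝ) 1 := by
    intro k x hx
    refine ⟨fun i => by simp only [p, Pi.zero_apply]; positivity, fun i => ?_⟩
    simp only [p, Pi.one_apply]
    rw [div_le_one (by positivity)]
    exact_mod_cast hx i
  have hcube : ∀ k : ℕ, ∃ x : ι → ℕ, (∀ i, x i < k + 1) ∧ ∀ a,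
      (∃ y, (∀ j, x j ≤ y j ∧ y j ≤ x j + 1) ∧ G (p k y) a ≤ 0) ∧
      (∃ y, (∀ j, x j ≤ y j ∧ y j ≤ x j + 1) ∧ 0 ≤ G (p k y) a) := by
    intro k
    obtain ⟨x, hx, h⟩ := exists_cube_both_labels (k + 1)
      (fun a x => if x a = 0 then 0 else if x a = k + 1 then 1 else
        if G (p k x) a ≤ 0 then 0 else 1)
      (fun a x h => by simp [h]) (fun a x h => by simp [h])
    refine ⟨x, hx, fun a => ?_⟩
    obtain ⟨⟨y, hy, hly⟩, ⟨z, hz, hlz⟩⟩ := h a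
    have hbound : ∀ y : ι → ℕ, (∀ j, x j ≤ y j ∧ y j ≤ x j + 1) →
        p k y ∈ Set.Icc (0 : ι → ℝ) 1 := fun y hy =>
      hp k y fun i => (hy i).2.trans (hx i)
    refine ⟨⟨y, hy, ?_⟩, ⟨z, hz, ?_⟩⟩
    · split_ifs at hly with h₁ h₂ h₃
      · exact hG₀ _ (hbound y hy) a (by simp [p, h₁])
      · exact absurd hly one_ne_zero
      · exact h₃
      · exact absurd hly one_ne_zero
    · split_ifs at hlz with h₁ h₂ h₃
      · exact absurd hlz zero_ne_one
      · refine hG₁ _ (hbound z hz) a ?_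
        simp only [p, h₂]
        push_cast
        exact div_self (by positivity)
      · exact absurd hlz zero_ne_one
      · exact (not_le.1 h₃).le
  choose x hx hxG using hcube
  have hmem : ∀ (w : ℕ → ι → ℕ), (∀ k j, x k j ≤ w k j ∧ w k j ≤ x k j + 1) →
      ∀ k, p k (w k) ∈ Set.Icc (0 : ι → ℝ) 1 := fun w hw k =>
    hp k _ fun i => (hw k i).2.trans (hx k i)
  obtain ⟨z, hz, φ, hφ, hlim⟩ := isCompact_Icc.tendsto_subseq
    (hmem x fun k j => ⟨le_rfl, Nat.le_succ _⟩)
  have hconv : ∀ (w : ℕ → ι → ℕ), (∀ k j, x k j ≤ w k j ∧ w k j ≤ x k j + 1) →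
      ∀ a, Tendsto (fun k => G (p (φ k) (w (φ k))) a) atTop (𝓝 (G z a)) := by
    intro w hw a
    have hw_lim : Tendsto (fun k => p (φ k) (w (φ k))) atTop (𝓝 z) := by
      rw [tendsto_pi_nhds] at hlim ⊢
      intro j
      have hupper : Tendsto (fun k => p (φ k) (x (φ k)) j + 1 / ((φ k : ℝ) + 1)) atTop
          (𝓝 (z j)) := by
        simpa using (hlim j).add
          (tendsto_one_div_add_atTop_nhds_zero_nat.comp hφ.tendsto_atTop)
      refine tendsto_of_tendsto_of_tendsto_of_le_of_le (hlim j) hupper (fun k => ?_) fun k => ?_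
      · simp only [p, Function.comp_apply]
        gcongr
        exact (hw (φ k) j).1
      · simp only [p]
        rw [← add_div]
        gcongr
        exact_mod_cast (hw (φ k) j).2
    have hG := (hcont z hz).tendsto.comp
      (tendsto_nhdsWithin_iff.2 ⟨hw_lim, Eventually.of_forall fun k => hmem w hw (φ k)⟩)
    exact tendsto_pi_nhds.1 hG a
  refine ⟨z, hz, funext fun a => le_antisymm ?_ ?_⟩
  · choose w hw hGw using fun k => (hxG k a).1
    exact le_of_tendsto' (hconv w hw a) fun k => hGw (φ k)
  · choose w hw hGw using fun k => (hxG k a).2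
    exact ge_of_tendsto' (hconv w hw a) fun k => hGw (φ k)

end Grid

/-- If `F : [0,1]ⁿ → [0,∞)ⁿ` is continuous and `F_j(x) = 0` exactly when `x_j = 0`,
then the image of `F` contains a diagonal segment `{(y,…,y) : 0 ≤ y < δ}`. -/
theorem cube_image_contains_diagonal
    (n : ℕ) (F : (Fin n → ℝ) → (Fin n → ℝ))
    (hcont : ContinuousOn F (Set.Icc (0 : Fin n → ℝ) 1))
    (hnonneg : ∀ x ∈ Set.Icc (0 : Fin n → ℝ) 1, ∀ j, 0 ≤ F x j)
    (hzero : ∀ x ∈ Set.Icc (0 : Fin n → ℝ) 1, ∀ j, F x j = 0 ↔ x j = 0) :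
    ∃ δ > 0, ∀ y : ℝ, 0 ≤ y → y < δ →
      (fun _ : Fin n => y) ∈ F '' Set.Icc (0 : Fin n → ℝ) 1 := by
  have hlower : ∀ j, ∃ ε > 0, ∀ x ∈ Set.Icc (0 : Fin n → ℝ) 1, x j = 1 → ε ≤ F x j := by
    intro j
    have hcompact : IsCompact (Set.Icc (0 : Fin n → ℝ) 1 ∩ {x | x j = 1}) :=
      isCompact_Icc.inter_right (isClosed_eq (continuous_apply j) continuous_const)
    obtain ⟨m, hm, hmin⟩ := hcompact.exists_isMinOn
      ⟨1, ⟨zero_le_one, le_rfl⟩, rfl⟩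
      (((continuous_apply j).comp_continuousOn hcont).mono Set.inter_subset_left)
    refine ⟨F m j, lt_of_le_of_ne (hnonneg m hm.1 j) fun h => ?_, fun x hx hxj => hmin ⟨hx, hxj⟩⟩
    have hmj : m j = 1 := hm.2
    exact one_ne_zero (hmj.symm.trans ((hzero m hm.1 j).1 h.symm))
  choose ε hε hle using hlower
  obtain ⟨δ, hδ, hδε⟩ : ∃ δ > 0, ∀ j, δ ≤ ε j :=
    (((eventually_mem_nhdsWithin (a := (0 : ℝ)) (s := Set.Ioi 0))).and
      (Filter.eventually_all.2 fun j =>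
        (eventually_le_nhds (hε j)).filter_mono nhdsWithin_le_nhds)).exists
  refine ⟨δ, hδ, fun y hy hyδ => ?_⟩
  obtain ⟨x, hx, hGx⟩ := poincare_miranda (fun x => F x - fun _ => y)
    (hcont.sub continuousOn_const)
    (fun x hx j hxj => by simpa [(hzero x hx j).2 hxj] using hy)
    (fun x hx j hxj => by
      simpa using hyδ.le.trans ((hδε j).trans (hle j x hx hxj)))
  exact ⟨x, hx, sub_eq_zero.1 hGx⟩
end
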